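/- A cubic polynomial L(λ) = p₀λ³ + p₁λ² + p₂λ + p₃ with real coefficients and p₀ > 0 has all its roots with negative real parts if and only if p₁ > 0, p₂ > 0, p₃ > 0 and p₁p₂ > p₀p₃. -/

import Mathlib

/-!
A real cubic has a real root, so it factors as `(X + s) * (a * X ^ 2 + b * X + c)`, and its roots
lie in the open left half-plane iff those of both factors do, that is iff `s`, `b` and `c` are
positive. In these parameters the gap `p₁p₂ - p₀p₃` equals `b * (c + b * s + a * s ^ 2)`; this is
what forces `b` to be positive.
-/

open Polynomial

/-- A real polynomial is *Hurwitz* (stable) if all its complex roots lie in the open left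
half-plane. The zero polynomial is not Hurwitz; nonzero constants are. -/
def IsHurwitz (p : ℝ[X]) : Prop :=
  ∀ z : ℂ, aeval z p = 0 → z.re < 0

theorem isHurwitz_mul {p q : ℝ[X]} : IsHurwitz (p * q) ↔ IsHurwitz p ∧ IsHurwitz q := by
  simp only [IsHurwitz, map_mul, mul_eq_zero, or_imp, forall_and]

theorem isHurwitz_X_add_C {s : ℝ} : IsHurwitz (X + C s) ↔ 0 < s := by
  simp [IsHurwitz, add_eq_zero_iff_eq_neg]

theorem IsHurwitz.eval_pos {p : ℝ[X]} (hp : IsHurwitz p) (hlc : 0 ≤ p.leadingCoeff) {x : ℝ}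
    (hx : 0 ≤ x) : 0 < p.eval x := by
  refine zero_lt_eval_of_roots_lt_of_leadingCoeff_nonneg (fun y hy => ?_) hlc
  have hroot : aeval (y : ℂ) p = 0 := by
    rw [← Complex.coe_algebraMap, aeval_algebraMap_apply_eq_algebraMap_eval, hy.eq_zero, map_zero]
  exact (hp y hroot).trans_le hx

section Quadratic

variable {a b c : ℝ}

theorem isHurwitz_quadratic_of_pos (ha : 0 ≤ a) (hb : 0 < b) (hc : 0 < c) :
    IsHurwitz (C a * X ^ 2 + C b * X + C c) := by
  intro z hz
  by_contra! hre_nonneg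
  have hre : a * (z.re ^ 2 - z.im ^ 2) + b * z.re + c = 0 := by
    simpa [pow_two] using congrArg Complex.re hz
  have him : z.im * (2 * a * z.re + b) = 0 := by
    have him' : a * (z.re * z.im + z.im * z.re) + b * z.im = 0 := by
      simpa [pow_two] using congrArg Complex.im hz
    linear_combination him'
  have hreal : z.im = 0 := (mul_eq_zero.mp him).resolve_right (by positivity)
  have hpos : 0 < a * z.re ^ 2 + b * z.re + c := by positivity
  rw [hreal] at hre
  linarith

theorem IsHurwitz.quadratic_linear_coeff_pos (ha : 0 < a)
    (h : IsHurwitz (C a * X ^ 2 + C b * X + C c)) : 0 < b := by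
  have ha₀ : (a : ℂ) ≠ 0 := Complex.ofReal_ne_zero.mpr ha.ne'
  obtain ⟨z, hz⟩ := IsAlgClosed.exists_aeval_eq_zero ℂ (C a * X ^ 2 + C b * X + C c)
    (by rw [degree_quadratic ha.ne']; decide)
  -- By Vieta, the other root is `-b / a - z`.
  have hz' : aeval (((-b / a : ℝ) : ℂ) - z) (C a * X ^ 2 + C b * X + C c) = 0 := by
    rw [← hz]
    simp only [map_add, map_mul, map_pow, aeval_C, aeval_X, Complex.coe_algebraMap]
    push_cast
    field_simp
    ring
  have hsum : -b / a < 0 := by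
    have := h _ hz'
    rw [Complex.sub_re, Complex.ofReal_re] at this
    linarith [h z hz]
  simpa [div_neg_iff, ha, ha.not_gt] using hsum

theorem isHurwitz_quadratic (ha : 0 < a) :
    IsHurwitz (C a * X ^ 2 + C b * X + C c) ↔ 0 < b ∧ 0 < c := by
  refine ⟨fun h => ⟨h.quadratic_linear_coeff_pos ha, ?_⟩,
    fun ⟨hb, hc⟩ => isHurwitz_quadratic_of_pos ha.le hb hc⟩
  simpa using h.eval_pos (by rw [leadingCoeff_quadratic ha.ne']; exact ha.le) le_rfl

end Quadratic

theorem exists_isRoot_of_odd_natDegree {p : ℝ[X]} (hp : Odd p.natDegree) : ∃ x, p.IsRoot x := by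
  by_contra! hroot
  have hsign : ((Int.negOnePow p.natDegree : ℤ) : ℝ) = -1 := by
    rw [Int.negOnePow_odd _ (by exact_mod_cast hp)]
    simp
  -- Without roots, `p` has at `0` both its sign at `+∞` and its sign at `-∞`, which are opposite.
  rcases le_total 0 p.leadingCoeff with hlc | hlc
  · have hright : 0 < p.eval 0 := zero_lt_eval_of_roots_lt_of_leadingCoeff_nonneg
      (fun y hy => absurd hy (hroot y)) hlc
    have hleft := zero_lt_negOnePow_mul_eval_of_lt_roots_of_leadingCoeff_nonneg (x := 0)
      (fun y hy => absurd hy (hroot y)) hlc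
    rw [hsign] at hleft
    linarith
  · have hright : p.eval 0 < 0 := eval_lt_zero_of_roots_lt_of_leadingCoeff_nonpos
      (fun y hy => absurd hy (hroot y)) hlc
    have hleft := negOnePow_mul_eval_lt_zero_of_lt_roots_of_leadingCoeff_nonpos (x := 0)
      (fun y hy => absurd hy (hroot y)) hlc
    rw [hsign] at hleft
    linarith

theorem cubic_eq_X_add_C_mul_quadratic {R : Type*} [CommSemiring R] (a b c s : R) :
    C a * X ^ 3 + C (b + a * s) * X ^ 2 + C (c + b * s) * X + C (c * s) =
      (X + C s) * (C a * X ^ 2 + C b * X + C c) := by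
  simp only [map_add, map_mul]
  ring

theorem exists_cubic_factor_coeffs {a : ℝ} (ha : a ≠ 0) (p₁ p₂ p₃ : ℝ) :
    ∃ s b c, p₁ = b + a * s ∧ p₂ = c + b * s ∧ p₃ = c * s := by
  obtain ⟨r, hr⟩ := exists_isRoot_of_odd_natDegree
    (p := C a * X ^ 3 + C p₁ * X ^ 2 + C p₂ * X + C p₃) (by rw [natDegree_cubic ha]; decide)
  have hr₀ : a * r ^ 3 + p₁ * r ^ 2 + p₂ * r + p₃ = 0 := by simpa using hr
  refine ⟨-r, p₁ + a * r, p₂ + (p₁ + a * r) * r, by ring, by ring, ?_⟩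
  linear_combination hr₀

theorem cubic_factor_coeffs_pos_iff {R : Type*} [CommRing R] [LinearOrder R]
    [IsStrictOrderedRing R] {a b c s : R} (ha : 0 ≤ a) :
    (0 < s ∧ 0 < b ∧ 0 < c) ↔
      0 < b + a * s ∧ 0 < c + b * s ∧ 0 < c * s ∧ a * (c * s) < (b + a * s) * (c + b * s) := by
  have hgap : (b + a * s) * (c + b * s) - a * (c * s) = b * (c + b * s + a * s ^ 2) := by ring
  rw [← sub_pos (b := a * (c * s)), hgap]
  constructor
  · rintro ⟨hs, hb, hc⟩
    exact ⟨by positivity, by positivity, by positivity, by positivity⟩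
  · rintro ⟨-, hlin, hconst, hgap_pos⟩
    have hb : 0 < b := pos_of_mul_pos_left hgap_pos (by positivity)
    have hs : 0 < s := by
      by_contra! hs_nonpos
      have hc : c < 0 := neg_of_mul_pos_left hconst hs_nonpos
      linarith [mul_nonpos_of_nonneg_of_nonpos hb.le hs_nonpos]
    exact ⟨hs, hb, pos_of_mul_pos_left hconst hs.le⟩

/-- Routh–Hurwitz criterion for cubic polynomials: a real cubic
`p₀λ³ + p₁λ² + p₂λ + p₃` with `p₀ > 0` has all complex roots with negative
real part iff `p₁ > 0`, `p₂ > 0`, `p₃ > 0` and `p₁p₂ > p₀p₃`. -/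
theorem routh_hurwitz_cubic (p0 p1 p2 p3 : ℝ) (hp0 : 0 < p0) :
    (∀ z : ℂ, (p0 : ℂ) * z ^ 3 + (p1 : ℂ) * z ^ 2 + (p2 : ℂ) * z + (p3 : ℂ) = 0 →
      z.re < 0) ↔ (0 < p1 ∧ 0 < p2 ∧ 0 < p3 ∧ p0 * p3 < p1 * p2) := by
  obtain ⟨s, b, c, rfl, rfl, rfl⟩ := exists_cubic_factor_coeffs hp0.ne' p1 p2 p3
  calc
    _ ↔ IsHurwitz (C p0 * X ^ 3 + C (b + p0 * s) * X ^ 2 + C (c + b * s) * X + C (c * s)) := by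
      simp [IsHurwitz]
    _ ↔ 0 < s ∧ 0 < b ∧ 0 < c := by
      rw [cubic_eq_X_add_C_mul_quadratic, isHurwitz_mul, isHurwitz_X_add_C,
        isHurwitz_quadratic hp0]
    _ ↔ _ := cubic_factor_coeffs_pos_iff hp0.le
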